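/- Let d ≥ 3 be an integer and α = d/2 − 1. Then for every integer i ≥ 0, Σ_{k=0}^{i} A_{k,i} · binom(k+d−3, k) = 1. -/

import Mathlib

/-!
Write `c k = binom(k+d-3, k)` and `F k i = A_{k,i} c k`. Multiplying the Gegenbauer expansion of
`x^i` by `x`, using the three-term recurrence `2(k+α) x C_k = (k+1) C_{k+1} + (k+2α-1) C_{k-1}`,
and evaluating at `x = 1` suggests
`F k (i+1) = p_{k-1} F (k-1) i + q_{k+1} F (k+1) i` with
`p_k = (k+2α) / (2(k+α))` and `q_k = k / (2(k+α))`.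
Since `p_k + q_k = 1`, these are the transition weights of a nearest-neighbour walk on `ℕ`
(reflected at `0`, as `q_0 = 0`), so the total mass `∑ k, F k i` does not depend on `i`; at `i = 0`
it is `1`. The recurrence itself (`weight_zero_succ`, `weight_succ_succ`) is checked directly from
the closed form of `A_{k,i}`.

Throughout, `d = e + 3`, so that `2α = e + 1` and `c k = binom(k+e, k)`.
-/

/-- The Gegenbauer (ultraspherical) polynomials `C_n^{(α)}`, defined by the
recurrence `C_0 = 1`, `C_1(x) = 2αx`,
`n·C_n(x) = 2x(n+α−1)·C_{n−1}(x) − (n+2α−2)·C_{n−2}(x)`. -/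
noncomputable def gegenbauer (α : ℝ) : ℕ → ℝ → ℝ
  | 0, _ => 1
  | 1, x => 2 * α * x
  | (n + 2), x =>
      (2 * x * ((n : ℝ) + 1 + α) * gegenbauer α (n + 1) x
        - ((n : ℝ) + 2 * α) * gegenbauer α n x) / ((n : ℝ) + 2)

/-- The rising factorial `(α)_m = α(α+1)⋯(α+m−1)`. -/
noncomputable def risingFac (α : ℝ) : ℕ → ℝ
  | 0 => 1
  | (n + 1) => risingFac α n * (α + n)

/-- The cosine-power expansion coefficients `A_{k,i}` in dimension `d` (with
`α = d/2 − 1`): `A_{k,i} = i!(α+k)/(2^i ((i−k)/2)! (α)_{(i+k)/2+1})` when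
`k ≤ i` and `k ≡ i (mod 2)`, and `0` otherwise. -/
noncomputable def Acoef (d : ℕ) (k i : ℕ) : ℝ :=
  if k ≤ i ∧ k % 2 = i % 2 then
    (Nat.factorial i : ℝ) * (((d : ℝ) / 2 - 1) + k) /
      (2 ^ i * (Nat.factorial ((i - k) / 2) : ℝ) *
        risingFac ((d : ℝ) / 2 - 1) ((i + k) / 2 + 1))
  else 0

lemma risingFac_pos {a : ℝ} (ha : 0 < a) (n : ℕ) : 0 < risingFac a n := by
  induction n with
  | zero => simp [risingFac]
  | succ n ih => rw [risingFac]; positivity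

/-- The summand `A_{k,i} · binom(k+d-3, k)` in dimension `d = e + 3`. -/
noncomputable def weight (e k i : ℕ) : ℝ :=
  Acoef (e + 3) k i * (Nat.choose (k + e) k : ℝ)

lemma weight_add_two_mul (e k m : ℕ) :
    weight e k (k + 2 * m) =
      (Nat.factorial (k + 2 * m) : ℝ) * (((e : ℝ) + 1) / 2 + k) /
        (2 ^ (k + 2 * m) * (Nat.factorial m : ℝ) * risingFac (((e : ℝ) + 1) / 2) (k + m + 1)) *
      (Nat.choose (k + e) k : ℝ) := by
  have h1 : (k + 2 * m - k) / 2 = m := by omega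
  have h2 : (k + 2 * m + k) / 2 + 1 = k + m + 1 := by omega
  have h3 : ((e + 3 : ℕ) : ℝ) / 2 - 1 = ((e : ℝ) + 1) / 2 := by push_cast; ring
  rw [weight, Acoef, if_pos (by omega), h1, h2, h3]

lemma weight_eq_zero (e k i : ℕ) (h : ¬ (k ≤ i ∧ k % 2 = i % 2)) : weight e k i = 0 := by
  rw [weight, Acoef, if_neg h, zero_mul]

lemma choose_succ_add (e k : ℕ) :
    (Nat.choose (k + 1 + e) (k + 1) : ℝ) =
      ((k : ℝ) + 1 + e) * (Nat.choose (k + e) k : ℝ) / (k + 1) := by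
  have h := Nat.add_one_mul_choose_eq (k + e) k
  have h' : ((k : ℝ) + e + 1) * (Nat.choose (k + e) k : ℝ)
      = (Nat.choose (k + e + 1) (k + 1) : ℝ) * (k + 1) := by exact_mod_cast h
  rw [show k + 1 + e = k + e + 1 by ring, eq_div_iff (by positivity), ← h']
  ring

/-- The probability of stepping up from `k`, i.e. `(k+2α) / (2(k+α))`. -/
noncomputable def stepUp (e k : ℕ) : ℝ := ((k : ℝ) + e + 1) / (2 * k + e + 1)

/-- The probability of stepping down from `k`, i.e. `k / (2(k+α))`. -/
noncomputable def stepDown (e k : ℕ) : ℝ := (k : ℝ) / (2 * k + e + 1)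

lemma stepUp_add_stepDown (e k : ℕ) : stepUp e k + stepDown e k = 1 := by
  rw [stepUp, stepDown, ← add_div, div_eq_one_iff_eq (by positivity)]
  ring

/-- The recurrence at the reflecting end `k = 0`, which is reached only from `k = 1`. -/
lemma weight_zero_succ (e i : ℕ) :
    weight e 0 (i + 1) = stepDown e 1 * weight e 1 i := by
  by_cases h : 1 ≤ i ∧ 1 % 2 = i % 2
  · obtain ⟨m, rfl⟩ : ∃ m, i = 1 + 2 * m := ⟨i / 2, by omega⟩
    rw [show 1 + 2 * m + 1 = 0 + 2 * (m + 1) by ring, weight_add_two_mul, weight_add_two_mul,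
      show 0 + 2 * (m + 1) = 1 + 2 * m + 1 by ring, show 0 + (m + 1) + 1 = 1 + m + 1 by ring]
    have hr := (risingFac_pos (a := ((e : ℝ) + 1) / 2) (by positivity) (1 + m + 1)).ne'
    simp only [Nat.factorial_succ, stepDown, Nat.choose_zero_right, Nat.choose_one_right]
    push_cast
    field_simp
    ring
  · rw [weight_eq_zero e 1 i h, weight_eq_zero e 0 (i + 1) (by omega), mul_zero]

/-- One step of the walk. It holds for all `k` and `i`, as both sides vanish for `k > i` and for
`k`, `i` of different parity. -/
lemma weight_succ_succ (e k i : ℕ) :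
    weight e (k + 1) (i + 1) =
      stepUp e k * weight e k i + stepDown e (k + 2) * weight e (k + 2) i := by
  by_cases h : k ≤ i ∧ k % 2 = i % 2
  · obtain ⟨m, rfl⟩ : ∃ m, i = k + 2 * m := ⟨(i - k) / 2, by omega⟩
    cases m with
    | zero =>
      rw [weight_eq_zero e (k + 2) _ (by omega),
        show k + 2 * 0 + 1 = k + 1 + 2 * 0 by ring, weight_add_two_mul, weight_add_two_mul,
        choose_succ_add]
      have hr := (risingFac_pos (a := ((e : ℝ) + 1) / 2) (by positivity) (k + 1)).ne'
      simp only [mul_zero, add_zero, Nat.factorial_succ, stepUp, risingFac] at hr ⊢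
      push_cast
      field_simp
      ring
    | succ m =>
      have e1 : k + 2 * (m + 1) + 1 = k + 1 + 2 * (m + 1) := by ring
      have e2 : weight e (k + 2) (k + 2 * (m + 1)) = weight e (k + 2) (k + 2 + 2 * m) := by
        congr 1; ring
      rw [e1, e2, weight_add_two_mul, weight_add_two_mul, weight_add_two_mul,
        choose_succ_add e (k + 1), choose_succ_add,
        show k + 1 + 2 * (m + 1) = k + 2 * m + 2 + 1 by ring,
        show k + 2 * (m + 1) = k + 2 * m + 2 by ring,
        show k + 2 + 2 * m = k + 2 * m + 2 by ring,
        show k + 1 + (m + 1) + 1 = k + m + 2 + 1 by ring,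
        show k + (m + 1) + 1 = k + m + 2 by ring,
        show k + 2 + m + 1 = k + m + 2 + 1 by ring,
        Nat.factorial_succ (k + 2 * m + 2), Nat.factorial_succ m, risingFac]
      have hr := (risingFac_pos (a := ((e : ℝ) + 1) / 2) (by positivity) (k + m + 2)).ne'
      simp only [stepUp, stepDown]
      push_cast
      field_simp
      ring
  · rw [weight_eq_zero e k i h, weight_eq_zero e (k + 2) i (by omega),
      weight_eq_zero e (k + 1) (i + 1) (by omega), mul_zero, mul_zero, add_zero]

lemma sum_weight (e i : ℕ) : ∑ k ∈ Finset.range (i + 1), weight e k i = 1 := by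
  induction i with
  | zero =>
    have := weight_add_two_mul e 0 0
    simp only [mul_zero, add_zero] at this
    rw [zero_add, Finset.sum_range_one, this]
    have : ((e : ℝ) + 1) ≠ 0 := by positivity
    simp [risingFac, this]
  | succ i ih =>
    -- The mass arriving from above is the full downward flux: `k = 0` sends nothing down, and
    -- `k = i + 1, i + 2` carry no mass.
    have hdown : ∑ k ∈ Finset.range (i + 1), stepDown e (k + 2) * weight e (k + 2) i
        + stepDown e 1 * weight e 1 i
        = ∑ k ∈ Finset.range (i + 1), stepDown e k * weight e k i := by
      have h := Finset.sum_range_succ' (fun k => stepDown e k * weight e k i) (i + 2)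
      rw [Finset.sum_range_succ' _ (i + 1), Finset.sum_range_succ, Finset.sum_range_succ,
        weight_eq_zero e (i + 1) i (by omega), weight_eq_zero e (i + 2) i (by omega)] at h
      have h0 : stepDown e 0 = 0 := by simp [stepDown]
      rw [h0] at h
      simpa [add_assoc] using h.symm
    rw [Finset.sum_range_succ', weight_zero_succ]
    simp only [weight_succ_succ]
    rw [Finset.sum_add_distrib, add_assoc, hdown, ← Finset.sum_add_distrib, ← ih]
    refine Finset.sum_congr rfl fun k _ => ?_
    rw [← add_mul, stepUp_add_stepDown, one_mul]

/-- Normalization identity for the cosine-power expansion in Gegenbauer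
polynomials, evaluated at `γ = 0` (used in the paper's proof of absolute
convergence of the generalized multipole expansion): for `d ≥ 3` and every
`i ≥ 0`, `∑_{k=0}^{i} A_{k,i} · C(k+d−3, k) = 1`. -/
theorem Acoef_normalization (d : ℕ) (hd : 3 ≤ d) (i : ℕ) :
    ∑ k ∈ Finset.range (i + 1), Acoef d k i * (Nat.choose (k + d - 3) k : ℝ) = 1 := by
  obtain ⟨e, rfl⟩ : ∃ e, d = e + 3 := ⟨d - 3, by omega⟩
  exact sum_weight e i
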